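/- arXiv:2205.14662 — 3 statements merged into one kernel-verified Lean document; each statement's English description precedes it below -/
import Mathlib

section
/- Let n ≥ 1, 0 < η < 1, B ≥ 1, and let (W(t))_{t≥0} be a sequence of n × n doubly stochastic matrices such that: every entry [W(t)]_{ij} is either 0 or at least η; every diagonal entry satisfies [W(t)]_{ii} ≥ η; and for every k ≥ 0 the directed graph on vertices {1,…,n} with edge set {(j,i) : [W(t)]_{ij} > 0 for some t with k ≤ t ≤ k+B−1} is strongly connected. Define the transition matrices Φ(t,s) = W(t)W(t−1)⋯W(s) for t ≥ s ≥ 0. Then for all t ≥ s ≥ 0 and all i, j, |[Φ(t,s)]_{ij} − 1/n| ≤ Γ θ^{t−s}, where Γ = (1 − η/(4n²))^{−2} and θ = (1 − η/(4n²))^{1/B}. -/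
open Finset

/-!
The squared Euclidean norm `∑ i, x i ^ 2` of a mean-zero vector contracts by the factor
`1 - η / (2 n²)` over every window of `B` consecutive steps `x ↦ W t *ᵥ x`. Applied to
`x = e_j - 1/n`, whose image under the transition matrix is the `j`-th column of `Φ t s` minus
`1/n`, and with `1 - η / (2 n²) ≤ (1 - η / (4 n²))²`, this gives the claim.

For the contraction, a single step loses exactly
`½ ∑ k, ∑ i, ∑ j, W k i * W k j * (x i - x j)²` (`energy_loss`). Sort the entries of the initial
vector as `g 0 ≤ g 1 ≤ ⋯ ≤ g m` with `m = n - 1`, let `r i` be the rank of `i`, and for `d < m`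
consider the cut between ranks `≤ d` and ranks `> d`. By strong connectivity some positive entry
of some `W t` in the window crosses the cut; let `τ d` be the first such time. Until then the two
sides evolve separately, so the values on the lower side stay `≤ g d` and those on the upper side
stay `≥ g (d + 1)` (`cut_invariant`). At time `τ d` the total weight across the cut is at least
`η / 2` (`cut_weight`). Hence the step at time `t` loses at least
`η / 2 * ∑ (g (d + 1) - g d)²` over the `d` with `τ d = t` (`step_loss`), and the whole window
loses at least `η / 2 * ∑ d < m, (g (d + 1) - g d)²` (`window_loss`). For mean-zero vectors,
Cauchy–Schwarz bounds the squared norm by `n²` times this sum of squared gaps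
(`sum_sq_le_gaps`).
-/

/-- `W` has a positive entry joining a rank `≤ d` to a rank `> d`, in either direction. -/
def Crosses {n : ℕ} (W : Matrix (Fin n) (Fin n) ℝ) (r : Fin n → ℕ) (d : ℕ) : Prop :=
  ∃ p q, 0 < W q p ∧ ((r p ≤ d ∧ d < r q) ∨ (r q ≤ d ∧ d < r p))

/-- The loss of squared norm in one step is the sum of the variances of `x` under the rows of
`W`, each written as a double sum. -/
lemma energy_loss {n : ℕ} (W : Matrix (Fin n) (Fin n) ℝ)
    (hrow : ∀ i, ∑ j, W i j = 1) (hcol : ∀ j, ∑ i, W i j = 1) (x : Fin n → ℝ) :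
    ∑ i, x i ^ 2 - ∑ i, (W.mulVec x) i ^ 2 =
      (1 / 2) * ∑ k, ∑ i, ∑ j, W k i * W k j * (x i - x j) ^ 2 := by
  have h1 : ∑ i, x i ^ 2 = ∑ k, ∑ i, W k i * x i ^ 2 := by
    rw [Finset.sum_comm]
    refine Finset.sum_congr rfl fun i _ => ?_
    rw [← Finset.sum_mul, hcol, one_mul]
  rw [h1, ← Finset.sum_sub_distrib, Finset.mul_sum]
  refine Finset.sum_congr rfl fun k _ => ?_
  have h2 : ∀ i j, W k i * W k j * (x i - x j) ^ 2 =
      (W k i * x i ^ 2) * W k j + W k i * (W k j * x j ^ 2)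
        - 2 * ((W k i * x i) * (W k j * x j)) := fun i j => by ring
  simp only [h2, Finset.sum_sub_distrib, Finset.sum_add_distrib, ← Finset.mul_sum,
    ← Finset.sum_mul, hrow]
  simp only [Matrix.mulVec, dotProduct]
  ring

lemma cut_weight {n : ℕ} {η : ℝ} (hη0 : 0 < η) (W : Matrix (Fin n) (Fin n) ℝ)
    (hnn : ∀ i j, 0 ≤ W i j) (hrow : ∀ i, ∑ j, W i j = 1)
    (hη : ∀ i j, W i j = 0 ∨ η ≤ W i j) (hdiag : ∀ i, η ≤ W i i)
    (r : Fin n → ℕ) (d : ℕ) (hc : Crosses W r d) :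
    η / 2 ≤ ∑ k, (∑ i, if r i ≤ d then W k i else 0) * (∑ i, if d < r i then W k i else 0) := by
  obtain ⟨p, q, hpos, hsep⟩ := hc
  have hqp : η ≤ W q p := (hη q p).resolve_left hpos.ne'
  have nn1 : ∀ k i, 0 ≤ if r i ≤ d then W k i else 0 := fun k i => by
    split_ifs <;> simp [hnn]
  have nn2 : ∀ k i, 0 ≤ if d < r i then W k i else 0 := fun k i => by
    split_ifs <;> simp [hnn]
  refine le_trans ?_ (Finset.single_le_sum (f := fun k => (∑ i, if r i ≤ d then W k i else 0) *
    (∑ i, if d < r i then W k i else 0)) (fun k _ => mul_nonneg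
      (Finset.sum_nonneg fun i _ => nn1 k i) (Finset.sum_nonneg fun i _ => nn2 k i))
      (Finset.mem_univ q))
  have hsum : (∑ i, if r i ≤ d then W q i else 0) + (∑ i, if d < r i then W q i else 0) = 1 := by
    rw [← Finset.sum_add_distrib, ← hrow q]
    refine Finset.sum_congr rfl fun i _ => ?_
    by_cases h : r i ≤ d
    · simp [h, not_lt.mpr h]
    · simp [h, not_le.mp h]
  have lo : ∀ i, r i ≤ d → η ≤ W q i → η ≤ ∑ i, if r i ≤ d then W q i else 0 := fun i hi hw =>
    le_trans (by simpa [hi] using hw)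
      (Finset.single_le_sum (f := fun i => if r i ≤ d then W q i else 0)
        (fun k _ => nn1 q k) (Finset.mem_univ i))
  have hi : ∀ i, d < r i → η ≤ W q i → η ≤ ∑ i, if d < r i then W q i else 0 := fun i hi hw =>
    le_trans (by simpa [hi] using hw)
      (Finset.single_le_sum (f := fun i => if d < r i then W q i else 0)
        (fun k _ => nn2 q k) (Finset.mem_univ i))
  obtain ⟨ha, hb⟩ : η ≤ (∑ i, if r i ≤ d then W q i else 0) ∧
      η ≤ ∑ i, if d < r i then W q i else 0 := by
    rcases hsep with ⟨h1, h2⟩ | ⟨h1, h2⟩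
    · exact ⟨lo p h1 hqp, hi q h2 (hdiag q)⟩
    · exact ⟨lo q h1 (hdiag q), hi p h2 hqp⟩
  show η / 2 ≤ (∑ i, if r i ≤ d then W q i else 0) * (∑ i, if d < r i then W q i else 0)
  generalize (∑ i, if r i ≤ d then W q i else 0) = a at *
  generalize (∑ i, if d < r i then W q i else 0) = b at *
  -- The larger of `a` and `b = 1 - a` is at least `1 / 2`, the smaller at least `η`.
  rcases le_total a (1 / 2) with h | h
  · nlinarith
  · nlinarith

lemma cut_invariant {n : ℕ} (W : ℕ → Matrix (Fin n) (Fin n) ℝ)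
    (hnn : ∀ t i j, 0 ≤ W t i j) (hrow : ∀ t i, ∑ j, W t i j = 1)
    (X : ℕ → Fin n → ℝ) (hX : ∀ t, X (t + 1) = (W t).mulVec (X t))
    (r : Fin n → ℕ) (g : ℕ → ℝ) (hg : Monotone g) (h0 : ∀ i, X 0 i = g (r i)) (d : ℕ) :
    ∀ t, (∀ t' < t, ¬ Crosses (W t') r d) →
      ∀ i, (r i ≤ d → X t i ≤ g d) ∧ (d < r i → g (d + 1) ≤ X t i) := by
  intro t
  induction t with
  | zero => exact fun _ i => ⟨fun h => h0 i ▸ hg h, fun h => h0 i ▸ hg h⟩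
  | succ t ih =>
    intro hno i
    have IH := ih fun t' ht' => hno t' (by omega)
    have hz : ∀ p, ((r p ≤ d ∧ d < r i) ∨ (r i ≤ d ∧ d < r p)) → W t i p = 0 := fun p hp =>
      le_antisymm (not_lt.mp fun h => hno t (by omega) ⟨p, i, h, hp⟩) (hnn t i p)
    rw [hX]
    simp only [Matrix.mulVec, dotProduct]
    constructor
    · intro hi
      rw [← one_mul (g d), ← hrow t i, Finset.sum_mul]
      refine Finset.sum_le_sum fun p _ => ?_
      by_cases hp : r p ≤ d
      · exact mul_le_mul_of_nonneg_left ((IH p).1 hp) (hnn t i p)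
      · simp [hz p (Or.inr ⟨hi, not_le.mp hp⟩)]
    · intro hi
      rw [← one_mul (g (d + 1)), ← hrow t i, Finset.sum_mul]
      refine Finset.sum_le_sum fun p _ => ?_
      by_cases hp : r p ≤ d
      · simp [hz p (Or.inl ⟨hp, hi⟩)]
      · exact mul_le_mul_of_nonneg_left ((IH p).2 (not_le.mp hp)) (hnn t i p)

/-- The difference of two values dominates, in square, the squared gaps of all cuts in `D`
separating them: the first and last of these cuts bound the two values. -/
lemma pair_bound (D : Finset ℕ) (g : ℕ → ℝ) (hg : Monotone g) (a b : ℕ) (u v : ℝ)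
    (hu : ∀ d ∈ D, a ≤ d → u ≤ g d) (hv : ∀ d ∈ D, d < b → g (d + 1) ≤ v) :
    ∑ d ∈ D, (if a ≤ d ∧ d < b then (g (d + 1) - g d) ^ 2 else 0) ≤ (u - v) ^ 2 := by
  rw [← Finset.sum_filter]
  set F := D.filter fun d => a ≤ d ∧ d < b with hF
  have hgap : ∀ d, 0 ≤ g (d + 1) - g d := fun d => sub_nonneg.mpr (hg (Nat.le_succ d))
  rcases F.eq_empty_or_nonempty with he | hne
  · rw [he]; simp only [Finset.sum_empty]; positivity
  have h1 := F.min'_mem hne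
  have h2 := F.max'_mem hne
  have hle : F.min' hne ≤ F.max' hne := F.min'_le _ h2
  have hsub : F ⊆ Finset.Ico (F.min' hne) (F.max' hne + 1) := fun d hd =>
    Finset.mem_Ico.mpr ⟨F.min'_le d hd, Nat.lt_succ_of_le (F.le_max' d hd)⟩
  generalize F.min' hne = d1 at *
  generalize F.max' hne = d2 at *
  have m1 := Finset.mem_filter.mp h1
  have m2 := Finset.mem_filter.mp h2
  have hu1 := hu d1 m1.1 m1.2.1
  have hv1 := hv d2 m2.1 m2.2.2
  have hs : ∑ d ∈ F, (g (d + 1) - g d) ≤ g (d2 + 1) - g d1 := by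
    rw [← Finset.sum_Ico_sub g (by omega : d1 ≤ d2 + 1)]
    exact Finset.sum_le_sum_of_subset_of_nonneg hsub fun d _ _ => hgap d
  have hs0 : 0 ≤ ∑ d ∈ F, (g (d + 1) - g d) := Finset.sum_nonneg fun d _ => hgap d
  have hsq : ∑ d ∈ F, (g (d + 1) - g d) ^ 2 ≤ (∑ d ∈ F, (g (d + 1) - g d)) ^ 2 :=
    Finset.sum_sq_le_sq_sum_of_nonneg fun d _ => hgap d
  nlinarith

/-- The bounds `hlo` and `hhi` say that the cuts in `D` still separate the values of `x`
according to `g`. -/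
lemma step_loss {n : ℕ} {η : ℝ} (hη0 : 0 < η) (W : Matrix (Fin n) (Fin n) ℝ)
    (hnn : ∀ i j, 0 ≤ W i j) (hrow : ∀ i, ∑ j, W i j = 1) (hcol : ∀ j, ∑ i, W i j = 1)
    (hη : ∀ i j, W i j = 0 ∨ η ≤ W i j) (hdiag : ∀ i, η ≤ W i i)
    (r : Fin n → ℕ) (g : ℕ → ℝ) (hg : Monotone g) (D : Finset ℕ) (x : Fin n → ℝ)
    (hc : ∀ d ∈ D, Crosses W r d)
    (hlo : ∀ d ∈ D, ∀ i, r i ≤ d → x i ≤ g d)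
    (hhi : ∀ d ∈ D, ∀ i, d < r i → g (d + 1) ≤ x i) :
    η / 2 * ∑ d ∈ D, (g (d + 1) - g d) ^ 2 ≤
      ∑ i, x i ^ 2 - ∑ i, (W.mulVec x) i ^ 2 := by
  rw [energy_loss W hrow hcol]
  let A : Fin n → Fin n → ℝ := fun i j =>
    ∑ d ∈ D, (if r i ≤ d ∧ d < r j then (g (d + 1) - g d) ^ 2 else 0)
  have hA : ∀ i j, A i j ≤ (x i - x j) ^ 2 := fun i j =>
    pair_bound D g hg _ _ _ _ (fun d hd h => hlo d hd i h) (fun d hd h => hhi d hd j h)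
  have hA0 : ∀ i j, r j ≤ r i → A i j = 0 := fun i j h =>
    Finset.sum_eq_zero fun d _ => if_neg (by omega)
  have hAA : ∀ i j, A i j + A j i ≤ (x i - x j) ^ 2 := by
    intro i j
    rcases le_total (r i) (r j) with h | h
    · rw [hA0 j i h, add_zero]; exact hA i j
    · rw [hA0 i j h, zero_add]; have := hA j i; nlinarith
  have hcut : ∀ k, ∑ i, ∑ j, W k i * W k j * A i j = ∑ d ∈ D, (g (d + 1) - g d) ^ 2 *
      ((∑ i, if r i ≤ d then W k i else 0) * (∑ i, if d < r i then W k i else 0)) := by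
    intro k
    simp only [A, Finset.mul_sum, Finset.sum_mul]
    have : ∀ i, ∑ j, ∑ d ∈ D, W k i * W k j *
        (if r i ≤ d ∧ d < r j then (g (d + 1) - g d) ^ 2 else 0) = ∑ d ∈ D, ∑ j, W k i * W k j *
        (if r i ≤ d ∧ d < r j then (g (d + 1) - g d) ^ 2 else 0) := fun i => Finset.sum_comm
    simp only [this]
    rw [Finset.sum_comm]
    refine Finset.sum_congr rfl fun d _ => ?_
    rw [Finset.sum_comm]
    refine Finset.sum_congr rfl fun j _ => Finset.sum_congr rfl fun i _ => ?_
    by_cases h1 : r i ≤ d <;> by_cases h2 : d < r j <;> simp [h1, h2]; ring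
  have hswap : ∀ k, ∑ i, ∑ j, W k i * W k j * A j i = ∑ i, ∑ j, W k i * W k j * A i j := by
    intro k
    rw [Finset.sum_comm]
    refine Finset.sum_congr rfl fun j _ => Finset.sum_congr rfl fun i _ => ?_
    ring
  have hk : ∀ k, 2 * ∑ i, ∑ j, W k i * W k j * A i j ≤
      ∑ i, ∑ j, W k i * W k j * (x i - x j) ^ 2 := by
    intro k
    rw [two_mul]
    nth_rewrite 2 [← hswap k]
    simp only [← Finset.sum_add_distrib, ← mul_add]
    exact Finset.sum_le_sum fun i _ => Finset.sum_le_sum fun j _ =>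
      mul_le_mul_of_nonneg_left (hAA i j) (mul_nonneg (hnn k i) (hnn k j))
  calc η / 2 * ∑ d ∈ D, (g (d + 1) - g d) ^ 2
      ≤ ∑ d ∈ D, (g (d + 1) - g d) ^ 2 * ∑ k, ((∑ i, if r i ≤ d then W k i else 0) *
          (∑ i, if d < r i then W k i else 0)) := by
        rw [Finset.mul_sum]
        refine Finset.sum_le_sum fun d hd => ?_
        rw [mul_comm]
        exact mul_le_mul_of_nonneg_left
          (cut_weight hη0 W hnn hrow hη hdiag r d (hc d hd)) (sq_nonneg _)
    _ = ∑ k, ∑ i, ∑ j, W k i * W k j * A i j := by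
        simp only [hcut, Finset.mul_sum]
        rw [Finset.sum_comm]
    _ ≤ _ := by
        have := Finset.sum_le_sum fun k (_ : k ∈ Finset.univ) => hk k
        rw [← Finset.mul_sum] at this
        linarith

lemma window_loss {n : ℕ} {η : ℝ} (hη0 : 0 < η) (B m : ℕ)
    (W : ℕ → Matrix (Fin n) (Fin n) ℝ)
    (hnn : ∀ t i j, 0 ≤ W t i j) (hrow : ∀ t i, ∑ j, W t i j = 1)
    (hcol : ∀ t j, ∑ i, W t i j = 1)
    (hη : ∀ t i j, W t i j = 0 ∨ η ≤ W t i j) (hdiag : ∀ t i, η ≤ W t i i)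
    (X : ℕ → Fin n → ℝ) (hX : ∀ t, X (t + 1) = (W t).mulVec (X t))
    (r : Fin n → ℕ) (g : ℕ → ℝ) (hg : Monotone g) (h0 : ∀ i, X 0 i = g (r i))
    (hc : ∀ d < m, ∃ t < B, Crosses (W t) r d) :
    η / 2 * ∑ d ∈ Finset.range m, (g (d + 1) - g d) ^ 2 ≤ ∑ i, X 0 i ^ 2 - ∑ i, X B i ^ 2 := by
  classical
  have hτ : ∀ d, ∃ t, d < m → (t < B ∧ Crosses (W t) r d ∧ ∀ t' < t, ¬ Crosses (W t') r d) := by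
    intro d
    by_cases hd : d < m
    · have hex : ∃ t, Crosses (W t) r d := (hc d hd).imp fun _ h => h.2
      obtain ⟨t, htB, ht⟩ := hc d hd
      exact ⟨Nat.find hex, fun _ => ⟨lt_of_le_of_lt (Nat.find_min' hex ht) htB,
        Nat.find_spec hex, fun t' h => Nat.find_min hex h⟩⟩
    · exact ⟨0, fun h => absurd h hd⟩
  choose τ hτ using hτ
  rw [← Finset.sum_range_sub' (fun t => ∑ i, X t i ^ 2) B,
    ← Finset.sum_fiberwise_of_maps_to (s := Finset.range m) (t := Finset.range B) (g := τ)
      (fun d hd => Finset.mem_range.mpr (hτ d (Finset.mem_range.mp hd)).1), Finset.mul_sum]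
  refine Finset.sum_le_sum fun t _ => ?_
  rw [hX t]
  have hmem : ∀ d ∈ (Finset.range m).filter (fun d => τ d = t), Crosses (W t) r d ∧
      ∀ t' < t, ¬ Crosses (W t') r d := by
    intro d hd
    obtain ⟨h1, rfl⟩ := Finset.mem_filter.mp hd
    exact (hτ d (Finset.mem_range.mp h1)).2
  exact step_loss hη0 (W t) (hnn t) (hrow t) (hcol t) (hη t) (hdiag t) r g hg _ _
    (fun d hd => (hmem d hd).1)
    (fun d hd i => (cut_invariant W hnn hrow X hX r g hg h0 d t (hmem d hd).2 i).1)
    (fun d hd i => (cut_invariant W hnn hrow X hX r g hg h0 d t (hmem d hd).2 i).2)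

lemma sum_sq_le_gaps {n : ℕ} (hn : 1 ≤ n) (x : Fin n → ℝ) (hx : ∑ i, x i = 0)
    (r : Fin n → ℕ) (hr : ∀ i, r i ≤ n - 1) (g : ℕ → ℝ) (hg : Monotone g)
    (h0 : ∀ i, x i = g (r i)) :
    ∑ i, x i ^ 2 ≤ (n : ℝ) ^ 2 * ∑ d ∈ Finset.range (n - 1), (g (d + 1) - g d) ^ 2 := by
  have hn0 : (0 : ℝ) < n := by exact_mod_cast hn
  have hlo : ∀ i, g 0 ≤ x i := fun i => h0 i ▸ hg (Nat.zero_le _)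
  have hhi : ∀ i, x i ≤ g (n - 1) := fun i => h0 i ▸ hg (hr i)
  have hg0 : g 0 ≤ 0 := by
    have := Finset.sum_le_sum fun i (_ : i ∈ Finset.univ) => hlo i
    rw [hx] at this
    simp at this
    by_contra! h
    nlinarith [mul_pos hn0 h]
  have hgm : 0 ≤ g (n - 1) := by
    have := Finset.sum_le_sum fun i (_ : i ∈ Finset.univ) => hhi i
    rw [hx] at this
    simp at this
    by_contra! h
    nlinarith [mul_neg_of_pos_of_neg hn0 h]
  have hcs := sq_sum_le_card_mul_sum_sq (s := Finset.range (n - 1))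
    (f := fun d => g (d + 1) - g d)
  rw [Finset.sum_range_sub, Finset.card_range] at hcs
  have hS : 0 ≤ ∑ d ∈ Finset.range (n - 1), (g (d + 1) - g d) ^ 2 :=
    Finset.sum_nonneg fun _ _ => sq_nonneg _
  generalize ∑ d ∈ Finset.range (n - 1), (g (d + 1) - g d) ^ 2 = S at *
  have hcast : ((n - 1 : ℕ) : ℝ) ≤ n := by exact_mod_cast Nat.sub_le n 1
  have hi : ∀ i, x i ^ 2 ≤ n * S := fun i => by
    have h1 := hlo i
    have h2 := hhi i
    have h3 : x i ^ 2 ≤ (g (n - 1) - g 0) ^ 2 := sq_le_sq' (by linarith) (by linarith)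
    have h4 := mul_le_mul_of_nonneg_right hcast hS
    linarith
  calc ∑ i, x i ^ 2 ≤ ∑ _i : Fin n, (n * S) := Finset.sum_le_sum fun i _ => hi i
    _ = _ := by simp; ring

/-- A sorted list of the values of `x`, extended constantly to a monotone function on `ℕ`,
together with the rank of each index. -/
lemma exists_sorting {n : ℕ} (hn : 1 ≤ n) (x : Fin n → ℝ) :
    ∃ (r : Fin n → ℕ) (g : ℕ → ℝ), Monotone g ∧ (∀ i, x i = g (r i)) ∧ (∀ i, r i ≤ n - 1) ∧
      (∃ i, r i = 0) ∧ (∃ i, r i = n - 1) := by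
  let σ := Tuple.sort x
  refine ⟨fun i => (σ.symm i : ℕ), fun k => x (σ ⟨min k (n - 1), by omega⟩), ?_, ?_, ?_, ?_, ?_⟩
  · intro a b hab
    refine Tuple.monotone_sort x ?_
    rw [Fin.mk_le_mk]
    omega
  · intro i
    have : (⟨min (σ.symm i : ℕ) (n - 1), by omega⟩ : Fin n) = σ.symm i := by
      ext
      simp only
      omega
    simp [this]
  · intro i
    have := (σ.symm i).isLt
    simp only
    omega
  · exact ⟨σ ⟨0, by omega⟩, by simp⟩
  · exact ⟨σ ⟨n - 1, by omega⟩, by simp⟩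

lemma transGen_crosses {α : Type*} (R : α → α → Prop) (r : α → ℕ) (d : ℕ) (a b : α)
    (h : Relation.TransGen R a b) (ha : r a ≤ d) (hb : d < r b) :
    ∃ p q, R p q ∧ r p ≤ d ∧ d < r q := by
  induction h with
  | single h => exact ⟨_, _, h, ha, hb⟩
  | @tail c e _ hce ih =>
    by_cases hc : d < r c
    · exact ih hc
    · exact ⟨c, e, hce, not_lt.mp hc, hb⟩

lemma window_contraction {n : ℕ} (hn : 1 ≤ n) {η : ℝ} (hη0 : 0 < η) (B : ℕ) (hB : 1 ≤ B)
    (W : ℕ → Matrix (Fin n) (Fin n) ℝ)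
    (hnn : ∀ t i j, 0 ≤ W t i j) (hrow : ∀ t i, ∑ j, W t i j = 1)
    (hcol : ∀ t j, ∑ i, W t i j = 1)
    (hη : ∀ t i j, W t i j = 0 ∨ η ≤ W t i j) (hdiag : ∀ t i, η ≤ W t i i) (k : ℕ)
    (hconn : ∀ a b : Fin n, a ≠ b →
      Relation.TransGen (fun p q : Fin n => ∃ t, k ≤ t ∧ t ≤ k + B - 1 ∧ 0 < W t q p) a b)
    (X : ℕ → Fin n → ℝ) (hX : ∀ t, X (t + 1) = (W (k + t)).mulVec (X t))
    (hsum : ∑ i, X 0 i = 0) :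
    ∑ i, X B i ^ 2 ≤ (1 - η / (2 * (n : ℝ) ^ 2)) * ∑ i, X 0 i ^ 2 := by
  obtain ⟨r, g, hg, h0, hr, ⟨i0, hi0⟩, ⟨i1, hi1⟩⟩ := exists_sorting hn (X 0)
  have hn0 : (0 : ℝ) < n := by exact_mod_cast hn
  have hc : ∀ d < n - 1, ∃ t < B, Crosses (W (k + t)) r d := by
    intro d hd
    have hne : i0 ≠ i1 := by rintro rfl; omega
    obtain ⟨p, q, ⟨t, h1, h2, h3⟩, hp, hq⟩ := transGen_crosses _ r d i0 i1 (hconn i0 i1 hne)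
      (by omega) (by omega)
    refine ⟨t - k, by omega, p, q, ?_, Or.inl ⟨hp, hq⟩⟩
    rwa [Nat.add_sub_cancel' h1]
  have h1 := window_loss hη0 B (n - 1) (fun t => W (k + t)) (fun t => hnn _) (fun t => hrow _)
    (fun t => hcol _) (fun t => hη _) (fun t => hdiag _) X hX r g hg h0 hc
  have h2 := sum_sq_le_gaps hn (X 0) hsum r hr g hg h0
  have h3 : η / (2 * (n : ℝ) ^ 2) * ∑ i, X 0 i ^ 2 ≤
      η / 2 * ∑ d ∈ Finset.range (n - 1), (g (d + 1) - g d) ^ 2 := by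
    have h4 := mul_le_mul_of_nonneg_left h2
      (by positivity : 0 ≤ η / (2 * (n : ℝ) ^ 2))
    refine h4.trans (le_of_eq ?_)
    field_simp
  linarith

/-- Geometric convergence of products of doubly stochastic matrices over uniformly
jointly strongly connected graph sequences (Nedić–Ozdaglar). -/
theorem transition_matrix_geometric_convergence
    {n : ℕ} (hn : 1 ≤ n) (η : ℝ) (hη0 : 0 < η) (hη1 : η < 1) (B : ℕ) (hB : 1 ≤ B)
    (W : ℕ → Matrix (Fin n) (Fin n) ℝ)
    (hWnn : ∀ t i j, 0 ≤ W t i j)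
    (hWrow : ∀ t i, ∑ j, W t i j = 1)
    (hWcol : ∀ t j, ∑ i, W t i j = 1)
    (hWη : ∀ t i j, W t i j = 0 ∨ η ≤ W t i j)
    (hWdiag : ∀ t i, η ≤ W t i i)
    (hconn : ∀ k : ℕ, ∀ a b : Fin n, a ≠ b →
      Relation.TransGen (fun p q : Fin n => ∃ t, k ≤ t ∧ t ≤ k + B - 1 ∧ 0 < W t q p) a b)
    (Φ : ℕ → ℕ → Matrix (Fin n) (Fin n) ℝ)
    (hΦdiag : ∀ s, Φ s s = W s)
    (hΦsucc : ∀ t s, s ≤ t → Φ (t + 1) s = W (t + 1) * Φ t s) :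
    ∀ t s, s ≤ t → ∀ i j,
      |Φ t s i j - 1 / (n : ℝ)| ≤
        ((1 - η / (4 * (n : ℝ) ^ 2)) ^ 2)⁻¹ *
          ((1 - η / (4 * (n : ℝ) ^ 2)) ^ ((1 : ℝ) / (B : ℝ))) ^ (t - s) := by
  intro t s hst i j
  have hn0 : (0 : ℝ) < n := by exact_mod_cast hn
  have hn1 : (1 : ℝ) ≤ n := by exact_mod_cast hn
  -- The vector `e_j - 1/n` evolved by `W s, W (s + 1), …`.
  let X : ℕ → Fin n → ℝ := fun u => Nat.rec (fun i => (if i = j then 1 else 0) - 1 / (n : ℝ))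
    (fun u x => (W (s + u)).mulVec x) u
  have hX : ∀ u, X (u + 1) = (W (s + u)).mulVec (X u) := fun u => rfl
  have hX0 : ∀ i, X 0 i = (if i = j then 1 else 0) - 1 / (n : ℝ) := fun i => rfl
  have hXΦ : ∀ u i, X (u + 1) i = Φ (s + u) s i j - 1 / (n : ℝ) := by
    intro u
    induction u with
    | zero =>
      intro i
      rw [hX]
      simp only [Matrix.mulVec, dotProduct, hX0, mul_sub, Finset.sum_sub_distrib,
        ← Finset.sum_mul, hWrow, add_zero, hΦdiag]
      simp
    | succ u ih =>
      intro i
      rw [hX, ← add_assoc, hΦsucc (s + u) s (by omega)]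
      simp only [Matrix.mulVec, dotProduct, ih, Matrix.mul_apply, mul_sub,
        Finset.sum_sub_distrib, ← Finset.sum_mul, hWrow, add_assoc]
      simp
  have hsum : ∀ u, ∑ i, X u i = 0 := by
    intro u
    induction u with
    | zero =>
      simp only [hX0, Finset.sum_sub_distrib]
      simp [hn0.ne']
    | succ u ih =>
      rw [hX]
      simp only [Matrix.mulVec, dotProduct]
      rw [Finset.sum_comm]
      simp only [← Finset.sum_mul, hWcol, one_mul, ih]
  have hQ0 : ∑ i, X 0 i ^ 2 ≤ 1 := by
    have h : ∀ i, X 0 i ^ 2 = (if i = j then 1 - 2 / (n : ℝ) else 0) + 1 / (n : ℝ) ^ 2 := by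
      intro i
      simp only [hX0]
      split_ifs <;> ring
    simp only [h, Finset.sum_add_distrib]
    simp
    have h1 : (n : ℝ) * ((n : ℝ) ^ 2)⁻¹ = 1 / n := by field_simp
    have h2 : 0 < 1 / (n : ℝ) := by positivity
    have h3 : 2 / (n : ℝ) = 2 * (1 / n) := by ring
    rw [h1, h3]
    linarith
  have hmono : ∀ u, ∑ i, X (u + 1) i ^ 2 ≤ ∑ i, X u i ^ 2 := by
    intro u
    have h := energy_loss (W (s + u)) (hWrow _) (hWcol _) (X u)
    have h' : 0 ≤ ∑ k, ∑ i, ∑ j, W (s + u) k i * W (s + u) k j * (X u i - X u j) ^ 2 :=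
      Finset.sum_nonneg fun k _ => Finset.sum_nonneg fun i _ => Finset.sum_nonneg fun j _ =>
        mul_nonneg (mul_nonneg (hWnn _ _ _) (hWnn _ _ _)) (sq_nonneg _)
    rw [hX]
    linarith
  set ρ : ℝ := 1 - η / (4 * (n : ℝ) ^ 2) with hρ
  have hδ : η / (4 * (n : ℝ) ^ 2) < 1 := by
    rw [div_lt_one (by positivity)]
    nlinarith
  have hδ0 : 0 < η / (4 * (n : ℝ) ^ 2) := by positivity
  have hρ0 : 0 < ρ := by linarith
  have hρ1 : ρ ≤ 1 := by linarith
  have hρ2 : 1 - η / (2 * (n : ℝ) ^ 2) ≤ ρ ^ 2 := by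
    have : η / (2 * (n : ℝ) ^ 2) = 2 * (η / (4 * (n : ℝ) ^ 2)) := by field_simp; norm_num
    rw [this, hρ]
    nlinarith [sq_nonneg (η / (4 * (n : ℝ) ^ 2))]
  have hQ : ∀ q, ∑ i, X (q * B) i ^ 2 ≤ (ρ ^ q) ^ 2 := by
    intro q
    induction q with
    | zero => simpa using hQ0
    | succ q ih =>
      have h := window_contraction hn hη0 B hB W hWnn hWrow hWcol hWη hWdiag (s + q * B)
        (hconn _) (fun u => X (q * B + u))
        (fun u => by rw [← add_assoc, hX, add_assoc]) (hsum _)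
      simp only [add_zero] at h
      rw [Nat.succ_mul]
      have hnn : 0 ≤ ∑ i, X (q * B) i ^ 2 := Finset.sum_nonneg fun _ _ => sq_nonneg _
      calc _ ≤ _ := h
        _ ≤ ρ ^ 2 * ∑ i, X (q * B) i ^ 2 := mul_le_mul_of_nonneg_right hρ2 hnn
        _ ≤ ρ ^ 2 * (ρ ^ q) ^ 2 := mul_le_mul_of_nonneg_left ih (sq_nonneg _)
        _ = _ := by ring
  have hanti : Antitone fun u => ∑ i, X u i ^ 2 := antitone_nat_of_succ_le hmono
  set q := (t - s + 1) / B with hq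
  have hle : q * B ≤ t - s + 1 := Nat.div_mul_le_self _ _
  have hlt : t - s + 1 < B * (q + 1) := Nat.lt_mul_div_succ _ (by omega)
  have hfin : |X (t - s + 1) i| ≤ ρ ^ q := by
    refine abs_le_of_sq_le_sq ?_ (by positivity)
    exact (Finset.single_le_sum (f := fun i => X (t - s + 1) i ^ 2)
      (fun _ _ => sq_nonneg _) (Finset.mem_univ i)).trans ((hanti hle).trans (hQ q))
  rw [hXΦ, Nat.add_sub_cancel' hst] at hfin
  refine hfin.trans ?_
  have hB0 : (0 : ℝ) < B := by exact_mod_cast hB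
  rw [← Real.rpow_natCast (ρ ^ ((1 : ℝ) / B)), ← Real.rpow_mul hρ0.le, ← div_eq_inv_mul,
    le_div_iff₀ (by positivity), ← pow_add, ← Real.rpow_natCast]
  refine Real.rpow_le_rpow_of_exponent_ge hρ0 hρ1 ?_
  rw [one_div, inv_mul_le_iff₀ hB0]
  have hlt' : t - s ≤ B * (q + 2) := by nlinarith
  exact_mod_cast hlt'
end

section
/- (Robbins–Siegmund) Let (Ω, F, P) be a probability space with a filtration (F_t)_{t≥0}, and let (X_t), (Y_t), (Z_t) be sequences of nonnegative, integrable random variables adapted to (F_t) such that Σ_{t=0}^∞ Z_t < ∞ almost surely and E[Y_{t+1} | F_t] ≤ Y_t − X_t + Z_t almost surely for every t ≥ 0. Then, almost surely, Σ_{t=0}^∞ X_t < ∞ and Y_t converges to a finite nonnegative random variable. -/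
open MeasureTheory Filter

/-!
Let `S n = ∑ t < n, Z t` and `r n = 1 / (1 + S n)`. Since
`Z t * r (t + 1) ^ 2 ≤ Z t * r t * r (t + 1) = r t - r (t + 1)`, discounting by the predictable,
nonincreasing weight `r ^ 2` turns the almost-supermartingale inequality into the statement that
`V n = r n ^ 2 * Y n + ∑ t < n, r (t + 1) ^ 2 * X t + r n`
is a genuine nonnegative supermartingale (`supermartingale_lyapunov`), with no localization needed.
Hence `V` converges almost surely. On the event that `∑ Z` converges, `r` has a positive limit, so
the weights can be removed pathwise (`summable_and_tendsto_of_lyapunov`): the weighted sums of `X`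
are monotone and bounded, hence converge, and then so does `r n ^ 2 * Y n`.
-/

namespace RobbinsSiegmund

/-- The discount factor `1 / (1 + ∑ t < n, z t)`. -/
noncomputable def discount (z : ℕ → ℝ) (n : ℕ) : ℝ := (1 + ∑ t ∈ Finset.range n, z t)⁻¹

/-- The discounted process `r n ^ 2 * y n + ∑ t < n, r (t + 1) ^ 2 * x t + r n`, where `r` is the
discount factor of `z`. -/
noncomputable def lyapunov (x y z : ℕ → ℝ) (n : ℕ) : ℝ :=
  discount z n ^ 2 * y n + (∑ t ∈ Finset.range n, discount z (t + 1) ^ 2 * x t + discount z n)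

section Pathwise

variable {x y z : ℕ → ℝ}

lemma discount_pos (hz : ∀ t, 0 ≤ z t) (n : ℕ) : 0 < discount z n := by
  have := Finset.sum_nonneg (s := Finset.range n) fun t _ => hz t
  unfold discount
  positivity

lemma discount_le_one (hz : ∀ t, 0 ≤ z t) (n : ℕ) : discount z n ≤ 1 := by
  have := Finset.sum_nonneg (s := Finset.range n) fun t _ => hz t
  exact inv_le_one_of_one_le₀ (by linarith)

lemma discount_sub_succ (hz : ∀ t, 0 ≤ z t) (n : ℕ) :
    discount z n - discount z (n + 1) = z n * discount z n * discount z (n + 1) := by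
  have h := Finset.sum_nonneg (s := Finset.range n) fun t _ => hz t
  have h' := hz n
  unfold discount
  rw [Finset.sum_range_succ]
  have h1 : 1 + ∑ t ∈ Finset.range n, z t ≠ 0 := by positivity
  have h2 : 1 + (∑ t ∈ Finset.range n, z t + z n) ≠ 0 := by positivity
  field_simp
  ring

lemma discount_succ_le (hz : ∀ t, 0 ≤ z t) (n : ℕ) : discount z (n + 1) ≤ discount z n := by
  have h1 := discount_sub_succ hz n
  have h2 := mul_nonneg (mul_nonneg (hz n) (discount_pos hz n).le) (discount_pos hz (n + 1)).le
  linarith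

lemma lyapunov_nonneg (hx : ∀ t, 0 ≤ x t) (hy : ∀ t, 0 ≤ y t) (hz : ∀ t, 0 ≤ z t) (n : ℕ) :
    0 ≤ lyapunov x y z n := by
  have h1 := (discount_pos hz n).le
  have h2 := hy n
  have h3 : 0 ≤ ∑ t ∈ Finset.range n, discount z (t + 1) ^ 2 * x t :=
    Finset.sum_nonneg fun t _ => mul_nonneg (sq_nonneg _) (hx t)
  unfold lyapunov
  positivity

/-- The one-step decrease of the discounted process when `y (n + 1)` is replaced by a quantity `e`
(in the application, its conditional expectation) satisfying the recursive bound. -/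
lemma lyapunov_step (hy : ∀ t, 0 ≤ y t) (hz : ∀ t, 0 ≤ z t) (n : ℕ)
    {e : ℝ} (he : e ≤ y n - x n + z n) :
    discount z (n + 1) ^ 2 * e
      + (∑ t ∈ Finset.range (n + 1), discount z (t + 1) ^ 2 * x t + discount z (n + 1))
      ≤ lyapunov x y z n := by
  have h0 := (discount_pos hz (n + 1)).le
  have h1 := discount_succ_le hz n
  have h2 := discount_sub_succ hz n
  have h3 : discount z (n + 1) ^ 2 ≤ discount z n ^ 2 := by gcongr
  have h4 : discount z (n + 1) ^ 2 * e ≤ discount z (n + 1) ^ 2 * (y n - x n + z n) := by gcongr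
  have h5 : discount z (n + 1) ^ 2 * y n ≤ discount z n ^ 2 * y n :=
    mul_le_mul_of_nonneg_right h3 (hy n)
  have h6 : z n * discount z (n + 1) * discount z (n + 1)
      ≤ z n * discount z n * discount z (n + 1) := by
    have := hz n
    gcongr
  unfold lyapunov
  rw [Finset.sum_range_succ]
  nlinarith

lemma summable_and_tendsto_of_lyapunov (hx : ∀ t, 0 ≤ x t) (hy : ∀ t, 0 ≤ y t)
    (hz : ∀ t, 0 ≤ z t) (hzs : Summable z) {l : ℝ}
    (hl : Tendsto (lyapunov x y z) atTop (nhds l)) :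
    Summable x ∧ ∃ c : ℝ, 0 ≤ c ∧ Tendsto y atTop (nhds c) := by
  have hS : 0 ≤ ∑' t, z t := tsum_nonneg hz
  set ρ : ℝ := (1 + ∑' t, z t)⁻¹ with hρ
  have hρ0 : 0 < ρ := by positivity
  have hr : Tendsto (discount z) atTop (nhds ρ) :=
    (hzs.hasSum.tendsto_sum_nat.const_add 1).inv₀ (by positivity)
  have hρle : ∀ n, ρ ≤ discount z n := fun n =>
    (antitone_nat_of_succ_le (discount_succ_le hz)).le_of_tendsto hr n
  have hnn : ∀ t, 0 ≤ discount z (t + 1) ^ 2 * x t := fun t => mul_nonneg (sq_nonneg _) (hx t)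
  obtain ⟨C, hC⟩ := hl.bddAbove_range
  have hsum : Summable fun t => discount z (t + 1) ^ 2 * x t := by
    refine summable_of_sum_range_le (c := C) hnn fun n => ?_
    have h1 : lyapunov x y z n ≤ C := hC ⟨n, rfl⟩
    have h2 : 0 ≤ discount z n ^ 2 * y n := mul_nonneg (sq_nonneg _) (hy n)
    have h3 := discount_pos hz n
    unfold lyapunov at h1
    linarith
  refine ⟨?_, ?_⟩
  · refine Summable.of_nonneg_of_le hx (fun t => ?_) (hsum.mul_left (ρ ^ 2)⁻¹)
    rw [le_inv_mul_iff₀ (by positivity)]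
    have := hρle (t + 1)
    have := hx t
    gcongr
  · have h1 : Tendsto (fun n => (lyapunov x y z n
        - (∑ t ∈ Finset.range n, discount z (t + 1) ^ 2 * x t + discount z n))
        / discount z n ^ 2) atTop (nhds _) :=
      (hl.sub (hsum.hasSum.tendsto_sum_nat.add hr)).div (hr.pow 2) (by positivity)
    have h2 : (fun n => (lyapunov x y z n
        - (∑ t ∈ Finset.range n, discount z (t + 1) ^ 2 * x t + discount z n))
        / discount z n ^ 2) = y := by
      funext n
      have := (discount_pos hz n).ne'
      unfold lyapunov
      rw [add_sub_cancel_right]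
      field_simp
    rw [h2] at h1
    exact ⟨_, ge_of_tendsto' h1 hy, h1⟩

end Pathwise

section Stochastic

variable {Ω : Type*} {mΩ : MeasurableSpace Ω} {P : Measure Ω}
  {ℱ : Filtration ℕ mΩ} {X Y Z : ℕ → Ω → ℝ}

/-- The discount factor is predictable: its value at time `n` only involves `Z t` for `t < n`. -/
lemma measurable_discount {m : MeasurableSpace Ω} (n : ℕ) (hZ : ∀ t < n, Measurable[m] (Z t)) :
    Measurable[m] fun ω => discount (Z · ω) n := by
  unfold discount
  refine (measurable_const.add (Finset.measurable_sum _ fun t ht => ?_)).inv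
  exact hZ t (Finset.mem_range.1 ht)

/-- The part of the discounted process at time `n` not involving `Y` is predictable. -/
lemma measurable_rest {m : MeasurableSpace Ω} (n : ℕ) (hX : ∀ t < n, Measurable[m] (X t))
    (hZ : ∀ t < n, Measurable[m] (Z t)) :
    Measurable[m] fun ω => ∑ t ∈ Finset.range n, discount (Z · ω) (t + 1) ^ 2 * X t ω
      + discount (Z · ω) n := by
  refine (Finset.measurable_sum _ fun t ht => ?_).add (measurable_discount n hZ)
  rw [Finset.mem_range] at ht
  exact ((measurable_discount (t + 1) fun s hs => hZ s (by omega)).pow_const 2).mul (hX t ht)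

lemma norm_discount_sq_le (hZnn : ∀ t ω, 0 ≤ Z t ω) (n : ℕ) (ω : Ω) :
    ‖discount (Z · ω) n ^ 2‖ ≤ 1 := by
  rw [Real.norm_of_nonneg (sq_nonneg _)]
  exact pow_le_one₀ (discount_pos (hZnn · ω) n).le (discount_le_one (hZnn · ω) n)

lemma integrable_discount_sq_mul (hZnn : ∀ t ω, 0 ≤ Z t ω) (hZ : ∀ t, Measurable (Z t))
    (n : ℕ) {f : Ω → ℝ} (hf : Integrable f P) :
    Integrable (fun ω => discount (Z · ω) n ^ 2 * f ω) P :=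
  hf.bdd_mul ((measurable_discount n fun t _ => hZ t).pow_const 2).aestronglyMeasurable
    (ae_of_all _ (norm_discount_sq_le hZnn n))

lemma integrable_rest [IsProbabilityMeasure P] (hZnn : ∀ t ω, 0 ≤ Z t ω) (hZ : ∀ t, Measurable (Z t))
    (hXint : ∀ t, Integrable (X t) P) (n : ℕ) :
    Integrable (fun ω => ∑ t ∈ Finset.range n, discount (Z · ω) (t + 1) ^ 2 * X t ω
      + discount (Z · ω) n) P := by
  refine (integrable_finsetSum _ fun t _ =>
    integrable_discount_sq_mul hZnn hZ (t + 1) (hXint t)).add ?_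
  refine Integrable.of_bound (measurable_discount n fun t _ => hZ t).aestronglyMeasurable 1
    (ae_of_all _ fun ω => ?_)
  rw [Real.norm_of_nonneg (discount_pos (hZnn · ω) n).le]
  exact discount_le_one (hZnn · ω) n

lemma supermartingale_lyapunov [IsProbabilityMeasure P]
    (hYnn : ∀ t ω, 0 ≤ Y t ω) (hZnn : ∀ t ω, 0 ≤ Z t ω)
    (hXint : ∀ t, Integrable (X t) P) (hYint : ∀ t, Integrable (Y t) P)
    (hXad : Adapted ℱ X) (hYad : Adapted ℱ Y) (hZad : Adapted ℱ Z)
    (hcond : ∀ t, P[Y (t + 1) | ℱ t] ≤ᵐ[P] fun ω => Y t ω - X t ω + Z t ω) :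
    Supermartingale (fun n ω => lyapunov (X · ω) (Y · ω) (Z · ω) n) ℱ P := by
  have hX : ∀ {s t}, s ≤ t → Measurable[ℱ t] (X s) := fun h => (hXad _).mono (ℱ.mono h) le_rfl
  have hZ : ∀ {s t}, s ≤ t → Measurable[ℱ t] (Z s) := fun h => (hZad _).mono (ℱ.mono h) le_rfl
  have hZm : ∀ t, Measurable (Z t) := fun t => (hZad t).mono (ℱ.le t) le_rfl
  refine supermartingale_nat (fun n => Measurable.stronglyMeasurable ?_) (fun n => ?_) fun n => ?_
  · exact (((measurable_discount n fun t ht => hZ ht.le).pow_const 2).mul (hYad n)).add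
      (measurable_rest n (fun t ht => hX ht.le) fun t ht => hZ ht.le)
  · exact (integrable_discount_sq_mul hZnn hZm n (hYint n)).add
      (integrable_rest hZnn hZm hXint n)
  · have hW : StronglyMeasurable[ℱ n] fun ω => discount (Z · ω) (n + 1) ^ 2 :=
      ((measurable_discount (n + 1) fun t ht =>
        hZ (Nat.lt_succ_iff.1 ht)).pow_const 2).stronglyMeasurable
    have hR := (measurable_rest (m := ℱ n) (X := X) (Z := Z) (n + 1)
      (fun t ht => hX (Nat.lt_succ_iff.1 ht))
      fun t ht => hZ (Nat.lt_succ_iff.1 ht)).stronglyMeasurable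
    have hWY := integrable_discount_sq_mul hZnn hZm (n + 1) (hYint (n + 1))
    have hRint := integrable_rest hZnn hZm hXint (n + 1)
    have hadd := condExp_add hWY hRint (ℱ n)
    rw [condExp_of_stronglyMeasurable (ℱ.le n) hR hRint] at hadd
    have hpull := condExp_mul_of_stronglyMeasurable_left hW hWY (hYint (n + 1))
    filter_upwards [hadd, hpull, hcond n] with ω h1 h2 h3
    refine (h1.trans ?_).trans_le (lyapunov_step (hYnn · ω) (hZnn · ω) n h3)
    exact congrArg (· + _) h2

/-- A nonnegative supermartingale is bounded in `L¹` by its initial expectation, hence converges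
almost surely. -/
lemma ae_tendsto_of_nonneg [IsProbabilityMeasure P] {V : ℕ → Ω → ℝ}
    (hV : Supermartingale V ℱ P)
    (hnn : ∀ n ω, 0 ≤ V n ω) : ∀ᵐ ω ∂P, ∃ l, Tendsto (V · ω) atTop (nhds l) := by
  have hb : ∀ n, eLpNorm ((-V) n) 1 P ≤ ((∫ ω, V 0 ω ∂P).toNNReal : ENNReal) := fun n => by
    have h1 : ∫ ω, V n ω ∂P ≤ ∫ ω, V 0 ω ∂P := by
      simpa using hV.setIntegral_le (Nat.zero_le n) MeasurableSet.univ
    rw [Pi.neg_apply, eLpNorm_neg, eLpNorm_one_eq_lintegral_enorm,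
      ← ofReal_integral_norm_eq_lintegral_enorm (hV.integrable n)]
    simp_rw [Real.norm_of_nonneg (hnn n _)]
    exact ENNReal.ofReal_le_ofReal h1
  filter_upwards [hV.neg.exists_ae_tendsto_of_bdd hb] with ω ⟨l, hl⟩
  exact ⟨-l, by simpa using hl.neg⟩

end Stochastic

end RobbinsSiegmund

/-- Robbins–Siegmund almost-supermartingale convergence theorem. -/
theorem robbins_siegmund {Ω : Type*} {mΩ : MeasurableSpace Ω}
    (P : Measure Ω) [IsProbabilityMeasure P] (ℱ : Filtration ℕ mΩ)
    (X Y Z : ℕ → Ω → ℝ)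
    (hXnn : ∀ t ω, 0 ≤ X t ω) (hYnn : ∀ t ω, 0 ≤ Y t ω) (hZnn : ∀ t ω, 0 ≤ Z t ω)
    (hXint : ∀ t, Integrable (X t) P) (hYint : ∀ t, Integrable (Y t) P)
    (hZint : ∀ t, Integrable (Z t) P)
    (hXad : Adapted ℱ X) (hYad : Adapted ℱ Y) (hZad : Adapted ℱ Z)
    (hZsum : ∀ᵐ ω ∂P, Summable (fun t => Z t ω))
    (hcond : ∀ t, P[Y (t + 1) | ℱ t] ≤ᵐ[P] fun ω => Y t ω - X t ω + Z t ω) :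
    ∀ᵐ ω ∂P, Summable (fun t => X t ω) ∧
      ∃ c : ℝ, 0 ≤ c ∧ Tendsto (fun t => Y t ω) atTop (nhds c) := by
  have hV := RobbinsSiegmund.supermartingale_lyapunov hYnn hZnn hXint hYint hXad hYad hZad hcond
  filter_upwards [hZsum, RobbinsSiegmund.ae_tendsto_of_nonneg hV fun n ω =>
    RobbinsSiegmund.lyapunov_nonneg (hXnn · ω) (hYnn · ω) (hZnn · ω) n] with ω hz ⟨l, hl⟩
  exact RobbinsSiegmund.summable_and_tendsto_of_lyapunov (hXnn · ω) (hYnn · ω) (hZnn · ω) hz hl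
end

section
/- Let n ≥ 1, let (W(t))_{t≥0} be n × n doubly stochastic matrices whose transition matrices Φ(t,s) = W(t)W(t−1)⋯W(s) satisfy |[Φ(t,s)]_{ij} − 1/n| ≤ Γ θ^{t−s} for all t ≥ s ≥ 0 and all i,j, for constants Γ > 0 and θ ∈ (0,1). On a probability space, let x_1(0),…,x_n(0) ∈ ℝ^m be deterministic with Λ := max_j ‖x_j(0)‖, let {α(t)}_{t≥0} be a non-increasing nonnegative sequence and c > 0, and let (x_i(t))_{t≥0} be random vectors in ℝ^m satisfying x_i(t+1) = Σ_{j=1}^n [W(t)]_{ij} x_j(t) + d_i(t), where the random vectors d_i(t) satisfy E[‖d_i(t)‖] ≤ c α(t). Then for every t ≥ 1 and every i, E[‖x_i(t) − x̄(t)‖] ≤ n Γ θ^{t−1} Λ + 2 c α(t−1) + n Γ c Σ_{s=1}^{t−1} θ^{t−1−s} α(s−1), where x̄(t) := (1/n) Σ_{j=1}^n x_j(t). -/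
/-!
Unrolling the recursion expresses `x (T + 1) i` through the initial vectors and all the
perturbations: the vector `x0 j` enters with coefficient `Φ T 0 i j`, the perturbation `d s j`
with `s < T` enters with coefficient `Φ T (s + 1) i j`, and `d T i` enters with coefficient `1`
(`state_unroll`). Since the columns of `W t` sum to `1`, the average of the states evolves by
adding the average perturbation (`average_unroll`). In the difference every coefficient of the
first two kinds becomes `Φ - 1/n`, which the mixing hypothesis bounds by a power of `θ`
(`norm_sub_average_le`); the last perturbation contributes `‖d T i‖` plus an average of norms,
whence the term `2 c α T`. Taking expectations of this pathwise bound gives the theorem.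
-/

open MeasureTheory Finset

section Pathwise

variable {n : ℕ} {E : Type*} [NormedAddCommGroup E] [NormedSpace ℝ E]
  {W : ℕ → Matrix (Fin n) (Fin n) ℝ} {Φ : ℕ → ℕ → Matrix (Fin n) (Fin n) ℝ}
  {x d : ℕ → Fin n → E}

/-- Multiplying a combination with coefficients `B` by `A` gives the coefficients `A * B`. -/
lemma sum_smul_sum_smul (A B : Matrix (Fin n) (Fin n) ℝ) (v : Fin n → E) (i : Fin n) :
    ∑ j, A i j • ∑ k, B j k • v k = ∑ k, (A * B) i k • v k := by
  simp only [Finset.smul_sum, smul_smul, Matrix.mul_apply, Finset.sum_smul]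
  exact Finset.sum_comm

lemma state_unroll (hΦdiag : ∀ s, Φ s s = W s)
    (hΦsucc : ∀ t s, s ≤ t → Φ (t + 1) s = W (t + 1) * Φ t s)
    (hrec : ∀ t i, x (t + 1) i = (∑ j, W t i j • x t j) + d t i) (T : ℕ) (i : Fin n) :
    x (T + 1) i = (∑ j, Φ T 0 i j • x 0 j)
      + (∑ s ∈ range T, ∑ j, Φ T (s + 1) i j • d s j) + d T i := by
  induction T generalizing i with
  | zero => simp [hrec, hΦdiag]
  | succ T ih =>
    have hswap : ∑ j, W (T + 1) i j • ∑ s ∈ range T, ∑ k, Φ T (s + 1) j k • d s k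
        = ∑ s ∈ range T, ∑ k, Φ (T + 1) (s + 1) i k • d s k := by
      simp only [Finset.smul_sum (s := range T)]
      rw [Finset.sum_comm]
      refine Finset.sum_congr rfl fun s hs => ?_
      rw [sum_smul_sum_smul, hΦsucc T (s + 1) (Finset.mem_range.mp hs)]
    rw [hrec (T + 1) i, Finset.sum_congr rfl fun j _ => by rw [ih j]]
    simp only [smul_add, Finset.sum_add_distrib]
    rw [sum_smul_sum_smul, ← hΦsucc T 0 (Nat.zero_le T), hswap, Finset.sum_range_succ,
      hΦdiag (T + 1)]
    abel

lemma average_unroll (hWcol : ∀ t j, ∑ i, W t i j = 1)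
    (hrec : ∀ t i, x (t + 1) i = (∑ j, W t i j • x t j) + d t i) (T : ℕ) :
    ∑ i, x T i = (∑ j, x 0 j) + ∑ s ∈ range T, ∑ j, d s j := by
  induction T with
  | zero => simp
  | succ T ih =>
    have hmass : ∑ i, ∑ j, W T i j • x T j = ∑ j, x T j := by
      rw [Finset.sum_comm]
      simp only [← Finset.sum_smul, hWcol, one_smul]
    simp only [hrec T, Finset.sum_add_distrib]
    rw [hmass, ih, Finset.sum_range_succ, add_assoc]

lemma norm_sub_average_le (hWcol : ∀ t j, ∑ i, W t i j = 1)
    (hΦdiag : ∀ s, Φ s s = W s)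
    (hΦsucc : ∀ t s, s ≤ t → Φ (t + 1) s = W (t + 1) * Φ t s) {Γ θ Λ : ℝ}
    (hΦb : ∀ t s, s ≤ t → ∀ i j, |Φ t s i j - 1 / (n : ℝ)| ≤ Γ * θ ^ (t - s))
    (hΛ : ∀ j, ‖x 0 j‖ ≤ Λ)
    (hrec : ∀ t i, x (t + 1) i = (∑ j, W t i j • x t j) + d t i) (T : ℕ) (i : Fin n) :
    ‖x (T + 1) i - (n : ℝ)⁻¹ • ∑ j, x (T + 1) j‖
      ≤ n * Γ * θ ^ T * Λ
        + (∑ s ∈ range T, ∑ j, Γ * θ ^ (T - (s + 1)) * ‖d s j‖)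
        + (‖d T i‖ + (n : ℝ)⁻¹ * ∑ j, ‖d T j‖) := by
  have hdecomp : x (T + 1) i - (n : ℝ)⁻¹ • ∑ j, x (T + 1) j
      = (∑ j, (Φ T 0 i j - 1 / (n : ℝ)) • x 0 j)
        + (∑ s ∈ range T, ∑ j, (Φ T (s + 1) i j - 1 / (n : ℝ)) • d s j)
        + (d T i - (n : ℝ)⁻¹ • ∑ j, d T j) := by
    rw [average_unroll hWcol hrec, state_unroll hΦdiag hΦsucc hrec, Finset.sum_range_succ]
    simp only [sub_smul, Finset.sum_sub_distrib, smul_add, Finset.smul_sum, one_div]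
    abel
  have hterm : ∀ s, s ≤ T → ∀ j (v : E),
      ‖(Φ T s i j - 1 / (n : ℝ)) • v‖ ≤ Γ * θ ^ (T - s) * ‖v‖ := fun s hs j v => by
    rw [norm_smul, Real.norm_eq_abs]
    exact mul_le_mul_of_nonneg_right (hΦb T s hs i j) (norm_nonneg v)
  have hinit : ‖∑ j, (Φ T 0 i j - 1 / (n : ℝ)) • x 0 j‖ ≤ n * Γ * θ ^ T * Λ := by
    calc _ ≤ ∑ _j : Fin n, Γ * θ ^ T * Λ := norm_sum_le_of_le _ fun j _ =>
            (hterm 0 (Nat.zero_le T) j _).trans <|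
              mul_le_mul_of_nonneg_left (hΛ j)
                ((abs_nonneg _).trans (hΦb T 0 (Nat.zero_le T) i j))
      _ = _ := by simp; ring
  have hpast : ‖∑ s ∈ range T, ∑ j, (Φ T (s + 1) i j - 1 / (n : ℝ)) • d s j‖
      ≤ ∑ s ∈ range T, ∑ j, Γ * θ ^ (T - (s + 1)) * ‖d s j‖ :=
    norm_sum_le_of_le _ fun s hs => norm_sum_le_of_le _ fun j _ =>
      hterm (s + 1) (Finset.mem_range.mp hs) j _
  have hlast : ‖d T i - (n : ℝ)⁻¹ • ∑ j, d T j‖ ≤ ‖d T i‖ + (n : ℝ)⁻¹ * ∑ j, ‖d T j‖ := by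
    refine (norm_sub_le _ _).trans ?_
    rw [norm_smul, norm_inv, Real.norm_natCast]
    gcongr
    exact norm_sum_le _ _
  rw [hdecomp]
  exact (norm_add₃_le).trans (add_le_add (add_le_add hinit hpast) hlast)

end Pathwise

/-- Consensus (disagreement) bound for distributed averaging with perturbations whose
expected norms are controlled by the step sizes. -/
theorem consensus_error_bound {n m : ℕ} (hn : 1 ≤ n)
    (W : ℕ → Matrix (Fin n) (Fin n) ℝ)
    (hWnn : ∀ t i j, 0 ≤ W t i j)
    (hWrow : ∀ t i, ∑ j, W t i j = 1)
    (hWcol : ∀ t j, ∑ i, W t i j = 1)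
    (Φ : ℕ → ℕ → Matrix (Fin n) (Fin n) ℝ)
    (hΦdiag : ∀ s, Φ s s = W s)
    (hΦsucc : ∀ t s, s ≤ t → Φ (t + 1) s = W (t + 1) * Φ t s)
    (Γ θ : ℝ) (hΓ : 0 < Γ) (hθ : θ ∈ Set.Ioo (0 : ℝ) 1)
    (hΦb : ∀ t s, s ≤ t → ∀ i j, |Φ t s i j - 1 / (n : ℝ)| ≤ Γ * θ ^ (t - s))
    {Ω : Type*} {mΩ : MeasurableSpace Ω} (P : Measure Ω) [IsProbabilityMeasure P]
    (x0 : Fin n → EuclideanSpace ℝ (Fin m)) (Λ : ℝ)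
    (hΛ : IsGreatest (Set.range fun j => ‖x0 j‖) Λ)
    (α : ℕ → ℝ) (hαnn : ∀ t, 0 ≤ α t) (hαmono : ∀ t, α (t + 1) ≤ α t)
    (c : ℝ) (hc : 0 < c)
    (x : ℕ → Fin n → Ω → EuclideanSpace ℝ (Fin m))
    (d : ℕ → Fin n → Ω → EuclideanSpace ℝ (Fin m))
    (hx0 : ∀ i, x 0 i = fun _ => x0 i)
    (hrec : ∀ t i ω, x (t + 1) i ω = (∑ j, W t i j • x t j ω) + d t i ω)
    (hdint : ∀ t i, Integrable (d t i) P)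
    (hdbd : ∀ t i, ∫ ω, ‖d t i ω‖ ∂P ≤ c * α t) :
    ∀ t, 1 ≤ t → ∀ i,
      ∫ ω, ‖x t i ω - (n : ℝ)⁻¹ • ∑ j, x t j ω‖ ∂P
        ≤ n * Γ * θ ^ (t - 1) * Λ + 2 * c * α (t - 1)
          + n * Γ * c * ∑ s ∈ Finset.Icc 1 (t - 1), θ ^ (t - 1 - s) * α (s - 1) := by
  intro t ht i
  obtain ⟨T, rfl⟩ : ∃ T, t = T + 1 := ⟨t - 1, by omega⟩
  simp only [Nat.add_sub_cancel]
  have hn0 : (n : ℝ) ≠ 0 := by positivity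
  have hpath : ∀ ω, ‖x (T + 1) i ω - (n : ℝ)⁻¹ • ∑ j, x (T + 1) j ω‖
      ≤ n * Γ * θ ^ T * Λ
        + (∑ s ∈ range T, ∑ j, Γ * θ ^ (T - (s + 1)) * ‖d s j ω‖)
        + (‖d T i ω‖ + (n : ℝ)⁻¹ * ∑ j, ‖d T j ω‖) := fun ω =>
    norm_sub_average_le (x := fun t j => x t j ω) (d := fun t j => d t j ω) hWcol hΦdiag
      hΦsucc hΦb (fun j => by simpa [hx0] using hΛ.2 ⟨j, rfl⟩) (fun t j => hrec t j ω) T i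
  have hdn : ∀ t j, Integrable (fun ω => ‖d t j ω‖) P := fun t j => (hdint t j).norm
  have hI1 : Integrable (fun ω => ∑ s ∈ range T, ∑ j, Γ * θ ^ (T - (s + 1)) * ‖d s j ω‖) P :=
    integrable_finsetSum _ fun s _ => integrable_finsetSum _ fun j _ => (hdn s j).const_mul _
  have hI2 : Integrable (fun ω => (n : ℝ)⁻¹ * ∑ j, ‖d T j ω‖) P :=
    (integrable_finsetSum _ fun j _ => hdn T j).const_mul _
  have hI0 : Integrable (fun _ : Ω => n * Γ * θ ^ T * Λ) P := integrable_const _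
  have hE1 : ∫ ω, ∑ s ∈ range T, ∑ j, Γ * θ ^ (T - (s + 1)) * ‖d s j ω‖ ∂P
      ≤ n * Γ * c * ∑ s ∈ Finset.Icc 1 T, θ ^ (T - s) * α (s - 1) := by
    have hθ0 : 0 < θ := hθ.1
    have hreindex : ∑ s ∈ Finset.Icc 1 T, θ ^ (T - s) * α (s - 1)
        = ∑ s ∈ range T, θ ^ (T - (s + 1)) * α s := by
      have h := Finset.sum_Ico_add' (fun s => θ ^ (T - s) * α (s - 1)) 0 T 1
      simp only [Nat.add_sub_cancel, zero_add] at h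
      rw [Finset.range_eq_Ico, h]
      rfl
    rw [hreindex, integral_finsetSum _ fun s _ =>
      integrable_finsetSum _ fun j _ => (hdn s j).const_mul _, Finset.mul_sum]
    refine Finset.sum_le_sum fun s _ => ?_
    rw [integral_finsetSum _ fun j _ => (hdn s j).const_mul _]
    calc _ ≤ ∑ _j : Fin n, Γ * θ ^ (T - (s + 1)) * (c * α s) :=
          Finset.sum_le_sum fun j _ => by
            rw [integral_const_mul]
            exact mul_le_mul_of_nonneg_left (hdbd s j) (by positivity)
      _ = _ := by simp; ring
  have hE2 : ∫ ω, (n : ℝ)⁻¹ * ∑ j, ‖d T j ω‖ ∂P ≤ c * α T := by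
    rw [integral_const_mul, integral_finsetSum _ fun j _ => hdn T j]
    calc _ ≤ (n : ℝ)⁻¹ * ∑ _j : Fin n, c * α T := by
          gcongr with j
          exact hdbd T j
      _ = c * α T := by simp [hn0]
  -- The Bochner integral of the nonnegative left side needs no integrability for this step.
  refine (integral_mono_of_nonneg (Filter.Eventually.of_forall fun ω => norm_nonneg _)
    ((hI0.add hI1).add ((hdn T i).add hI2)) (Filter.Eventually.of_forall hpath)).trans ?_
  rw [integral_add' (hI0.add hI1) ((hdn T i).add hI2), integral_add' hI0 hI1,
    integral_add' (hdn T i) hI2, integral_const]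
  simp only [probReal_univ, one_smul]
  linarith [hdbd T i]
end
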